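/- For x = (x₁, x₂) ∈ ℝ² and u ∈ P₂(ℝ²), write m_i(u) = ∫ y_i u(dy) (i = 1, 2) and set f(x, u) = (−2x₁ − x₁³ + ½m₁(u), −2x₂ + x₁ − x₂³ + ½m₂(u)), g(x, u) = ½ diag(1 − x₁, 1 − x₂) and g⁰(x, u) = ¼ diag(−x₁ + m₁(u), −x₂ + m₂(u)). Then for all x, y ∈ ℝ² and u, v ∈ P₂(ℝ²), 2⟨x − y, f(x, u) − f(y, v)⟩ + 3(|g(x, u) − g(y, v)|² + |g⁰(x, u) − g⁰(y, v)|²) ≤ −(11/8)|x − y|² + (5/8) W₂²(u, v), where ⟨·,·⟩ is the Euclidean inner product on ℝ² and |·| denotes the Hilbert–Schmidt norm on 2×2 matrices. -/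

import Mathlib

open MeasureTheory

noncomputable section

/-- Euclidean space ℝ². -/
abbrev R2 := EuclideanSpace ℝ (Fin 2)

/-- The set of couplings of two measures: probability measures on the product
whose first marginal is `u` and second marginal is `v`. -/
def couplings {E : Type*} [MeasurableSpace E] (u v : Measure E) :
    Set (Measure (E × E)) :=
  {π | IsProbabilityMeasure π ∧ π.map Prod.fst = u ∧ π.map Prod.snd = v}

/-- Infimum of the integral of a cost function over all couplings. -/
def WassPow {E : Type*} [MeasurableSpace E] (cost : E → E → ℝ) (u v : Measure E) : ℝ :=
  sInf ((fun π : Measure (E × E) => ∫ z, cost z.1 z.2 ∂π) '' couplings u v)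

/-- The `p`-Wasserstein distance. -/
def Wp {E : Type*} [MeasurableSpace E] [PseudoMetricSpace E] (p : ℝ) (u v : Measure E) : ℝ :=
  (WassPow (fun x y => dist x y ^ p) u v) ^ (1 / p)

/-- Membership in `P₂(ℝ²)`: a probability measure with finite second moment. -/
def MemP2 (u : Measure R2) : Prop :=
  IsProbabilityMeasure u ∧ Integrable (fun x => ‖x‖ ^ 2) u

/-- The `i`-th component of the mean: `m_i(u) = ∫ y_i u(dy)`. -/
def meanComp (u : Measure R2) (i : Fin 2) : ℝ := ∫ y, y i ∂u

/-- The Hilbert–Schmidt (Frobenius) norm of a real `2 × 2` matrix. -/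
def hsNorm (M : Matrix (Fin 2) (Fin 2) ℝ) : ℝ :=
  Real.sqrt (∑ i, ∑ j, (M i j) ^ 2)

/-- The drift of Example 6.2:
`f(x, u) = (−2x₁ − x₁³ + ½m₁(u), −2x₂ + x₁ − x₂³ + ½m₂(u))`. -/
def driftEx2 (x : R2) (u : Measure R2) : R2 :=
  (WithLp.equiv 2 (Fin 2 → ℝ)).symm
    ![-2 * x 0 - (x 0) ^ 3 + (1 / 2) * meanComp u 0,
      -2 * x 1 + x 0 - (x 1) ^ 3 + (1 / 2) * meanComp u 1]

/-- The diffusion coefficient of Example 6.2: `g(x, u) = ½ diag(1 − x₁, 1 − x₂)`. -/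
def diffEx2 (x : R2) (u : Measure R2) : Matrix (Fin 2) (Fin 2) ℝ :=
  (1 / 2 : ℝ) • Matrix.diagonal ![1 - x 0, 1 - x 1]

/-- The common-noise diffusion coefficient of Example 6.2:
`g⁰(x, u) = ¼ diag(−x₁ + m₁(u), −x₂ + m₂(u))`. -/
def diff0Ex2 (x : R2) (u : Measure R2) : Matrix (Fin 2) (Fin 2) ℝ :=
  (1 / 4 : ℝ) • Matrix.diagonal ![-x 0 + meanComp u 0, -x 1 + meanComp u 1]

/-!
Put `d = x - y` and `m = m(u) - m(v)`. Since cubing is monotone and `2 d₁ d₂ ≤ |d|²`, the drift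
pairing is at most `-(3/2)|d|² + ½⟨d, m⟩`; the two squared diffusion norms are exactly `¼|d|²` and
`(1/16)|d - m|²`. Young's inequality `2⟨d, m⟩ ≤ |d|² + |m|²` then bounds the left-hand side by
`-(7/4)|d|² + ½|m|²`. Finally `|m|^p` is at most the `p`-cost of any coupling by Jensen's
inequality, hence `|m| ≤ W_p(u, v)` for every `p ≥ 1`.
-/

section Wasserstein

theorem couplings_nonempty {E : Type*} [MeasurableSpace E] (u v : Measure E)
    [IsProbabilityMeasure u] [IsProbabilityMeasure v] : (couplings u v).Nonempty :=
  ⟨u.prod v, inferInstance, by simp [Measure.map_fst_prod], by simp [Measure.map_snd_prod]⟩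

theorem le_Wp {E : Type*} [MeasurableSpace E] [PseudoMetricSpace E] {p r : ℝ} {u v : Measure E}
    [IsProbabilityMeasure u] [IsProbabilityMeasure v] (hp : 0 < p) (hr : 0 ≤ r)
    (h : ∀ π ∈ couplings u v, r ^ p ≤ ∫ z, dist z.1 z.2 ^ p ∂π) : r ≤ Wp p u v := by
  have hle : r ^ p ≤ WassPow (fun x y => dist x y ^ p) u v :=
    le_csInf ((couplings_nonempty u v).image _) (Set.forall_mem_image.2 h)
  rw [Wp, one_div]
  exact (Real.le_rpow_inv_iff_of_pos hr ((Real.rpow_nonneg hr p).trans hle) hp).2 hle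

variable {E : Type*} [NormedAddCommGroup E] [NormedSpace ℝ E] {p : ℝ}

theorem norm_integral_rpow_le_integral_norm_rpow {α : Type*} [MeasurableSpace α] {μ : Measure α}
    [IsProbabilityMeasure μ] (hp : 1 ≤ p) {f : α → E} (hf : MemLp f (ENNReal.ofReal p) μ) :
    ‖∫ a, f a ∂μ‖ ^ p ≤ ∫ a, ‖f a‖ ^ p ∂μ := by
  have hp₀ : 0 ≤ p := zero_le_one.trans hp
  have hpow : Integrable (fun a => ‖f a‖ ^ p) μ := by
    simpa only [ENNReal.toReal_ofReal hp₀] using hf.integrable_norm_rpow'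
  calc ‖∫ a, f a ∂μ‖ ^ p ≤ (∫ a, ‖f a‖ ∂μ) ^ p := by
        gcongr
        exact norm_integral_le_integral_norm f
    _ ≤ ∫ a, ‖f a‖ ^ p ∂μ :=
        (convexOn_rpow hp).map_integral_le (Real.continuous_rpow_const hp₀).continuousOn
          isClosed_Ici (.of_forall fun a => norm_nonneg (f a))
          (hf.integrable (ENNReal.one_le_ofReal.2 hp)).norm hpow

variable [MeasurableSpace E] {u v : Measure E}

theorem norm_integral_sub_rpow_le_of_mem_couplings (hp : 1 ≤ p)
    (hu : MemLp id (ENNReal.ofReal p) u) (hv : MemLp id (ENNReal.ofReal p) v)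
    {π : Measure (E × E)} (hπ : π ∈ couplings u v) :
    ‖∫ x, x ∂u - ∫ y, y ∂v‖ ^ p ≤ ∫ z, dist z.1 z.2 ^ p ∂π := by
  obtain ⟨_, rfl, rfl⟩ := hπ
  have hfst : MemLp Prod.fst (ENNReal.ofReal p) π :=
    hu.comp_measurePreserving (measurable_fst.measurePreserving π)
  have hsnd : MemLp Prod.snd (ENNReal.ofReal p) π :=
    hv.comp_measurePreserving (measurable_snd.measurePreserving π)
  have hp' : 1 ≤ ENNReal.ofReal p := ENNReal.one_le_ofReal.2 hp
  have hmean : ∫ x, x ∂π.map Prod.fst - ∫ y, y ∂π.map Prod.snd = ∫ z, (z.1 - z.2) ∂π := by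
    rw [integral_map (f := fun x => x) measurable_fst.aemeasurable hu.aestronglyMeasurable,
      integral_map (f := fun y => y) measurable_snd.aemeasurable hv.aestronglyMeasurable,
      integral_sub (hfst.integrable hp') (hsnd.integrable hp')]
  rw [hmean]
  simpa only [dist_eq_norm, Pi.sub_apply] using
    norm_integral_rpow_le_integral_norm_rpow hp (hfst.sub hsnd)

theorem norm_integral_sub_le_Wp [IsProbabilityMeasure u] [IsProbabilityMeasure v] (hp : 1 ≤ p)
    (hu : MemLp id (ENNReal.ofReal p) u) (hv : MemLp id (ENNReal.ofReal p) v) :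
    ‖∫ x, x ∂u - ∫ y, y ∂v‖ ≤ Wp p u v :=
  le_Wp (zero_lt_one.trans_le hp) (norm_nonneg _)
    fun _ => norm_integral_sub_rpow_le_of_mem_couplings hp hu hv

end Wasserstein

section Coefficients

theorem sub_mul_pow_sub_pow_nonneg {R : Type*} [Ring R] [LinearOrder R]
    [IsStrictOrderedRing R] {n : ℕ} (hn : Odd n) (a b : R) :
    0 ≤ (a - b) * (a ^ n - b ^ n) :=
  (monotone_id.monovary hn.strictMono_pow.monotone).sub_mul_sub_nonneg b a

/-- The mean `m(u) = (m₁(u), m₂(u))` as a vector, defined through its components so that the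
identities for the coefficients hold for every measure; `meanVec_eq_integral` identifies it with
the Bochner integral. -/
def meanVec (u : Measure R2) : R2 :=
  WithLp.toLp 2 (meanComp u)

theorem meanVec_eq_integral {u : Measure R2} (hu : Integrable id u) :
    meanVec u = ∫ x, x ∂u := by
  ext i
  exact (eval_integral_piLp (fun i => hu.eval_piLp i) i).symm

theorem MemP2.memLp_id {u : Measure R2} (hu : MemP2 u) : MemLp id 2 u :=
  (memLp_two_iff_integrable_sq_norm aestronglyMeasurable_id).2 hu.2

theorem hsNorm_smul_diagonal_sq (c : ℝ) (v : R2) :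
    hsNorm (c • Matrix.diagonal v) ^ 2 = c ^ 2 * ‖v‖ ^ 2 := by
  rw [hsNorm, Real.sq_sqrt (by positivity)]
  simp [EuclideanSpace.real_norm_sq_eq, mul_pow, mul_add]

variable (x y : R2) (u v : Measure R2)

theorem hsNorm_diffEx2_sub_sq :
    hsNorm (diffEx2 x u - diffEx2 y v) ^ 2 = 1 / 4 * ‖x - y‖ ^ 2 := by
  have hdiag : diffEx2 x u - diffEx2 y v = (1 / 2 : ℝ) • Matrix.diagonal (y - x : R2) := by
    rw [diffEx2, diffEx2, ← smul_sub, Matrix.diagonal_sub]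
    congr 2
    ext i
    fin_cases i <;> simp
  rw [hdiag, hsNorm_smul_diagonal_sq, norm_sub_rev]
  norm_num

theorem hsNorm_diff0Ex2_sub_sq :
    hsNorm (diff0Ex2 x u - diff0Ex2 y v) ^ 2 =
      1 / 16 * ‖(x - y) - (meanVec u - meanVec v)‖ ^ 2 := by
  have hdiag : diff0Ex2 x u - diff0Ex2 y v =
      (1 / 4 : ℝ) • Matrix.diagonal ((meanVec u - meanVec v) - (x - y) : R2) := by
    rw [diff0Ex2, diff0Ex2, ← smul_sub, Matrix.diagonal_sub]
    congr 2
    ext i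
    fin_cases i <;> simp [meanVec] <;> ring
  rw [hdiag, hsNorm_smul_diagonal_sq, norm_sub_rev]
  norm_num

theorem inner_sub_driftEx2_sub_le :
    inner ℝ (x - y) (driftEx2 x u - driftEx2 y v) ≤
      -(3 / 2) * ‖x - y‖ ^ 2 + 1 / 2 * inner ℝ (x - y) (meanVec u - meanVec v) := by
  have hcube : 0 ≤ ∑ i, (x i - y i) * (x i ^ 3 - y i ^ 3) :=
    Finset.sum_nonneg fun i _ => sub_mul_pow_sub_pow_nonneg (by decide) (x i) (y i)
  have hcross : 2 * ((x 0 - y 0) * (x 1 - y 1)) ≤ ‖x - y‖ ^ 2 := by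
    simpa [EuclideanSpace.real_norm_sq_eq, mul_assoc] using
      two_mul_le_add_sq (x 0 - y 0) (x 1 - y 1)
  have hpair : inner ℝ (x - y) (driftEx2 x u - driftEx2 y v) =
      -2 * ‖x - y‖ ^ 2 + (x 0 - y 0) * (x 1 - y 1) - ∑ i, (x i - y i) * (x i ^ 3 - y i ^ 3) +
        1 / 2 * inner ℝ (x - y) (meanVec u - meanVec v) := by
    simp [driftEx2, meanVec, EuclideanSpace.real_norm_sq_eq, PiLp.inner_apply]
    ring
  linarith

theorem dissipativity_ex2_meanVec :
    2 * inner ℝ (x - y) (driftEx2 x u - driftEx2 y v) +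
        3 * (hsNorm (diffEx2 x u - diffEx2 y v) ^ 2 +
          hsNorm (diff0Ex2 x u - diff0Ex2 y v) ^ 2) ≤
      -(7 / 4) * ‖x - y‖ ^ 2 + 1 / 2 * ‖meanVec u - meanVec v‖ ^ 2 := by
  have hyoung := sq_nonneg ‖(x - y) - (meanVec u - meanVec v)‖
  rw [norm_sub_sq_real (x - y)] at hyoung
  rw [hsNorm_diffEx2_sub_sq, hsNorm_diff0Ex2_sub_sq, norm_sub_sq_real (x - y)]
  linarith [inner_sub_driftEx2_sub_le x y u v]

end Coefficients

theorem dissipativity_ex2_general {p : ℝ} (hp : 1 ≤ p) (x y : R2) {u v : Measure R2}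
    [IsProbabilityMeasure u] [IsProbabilityMeasure v]
    (hu : MemLp id (ENNReal.ofReal p) u) (hv : MemLp id (ENNReal.ofReal p) v) :
    2 * inner ℝ (x - y) (driftEx2 x u - driftEx2 y v) +
        3 * (hsNorm (diffEx2 x u - diffEx2 y v) ^ 2 +
          hsNorm (diff0Ex2 x u - diff0Ex2 y v) ^ 2) ≤
      -(7 / 4) * ‖x - y‖ ^ 2 + 1 / 2 * Wp p u v ^ 2 := by
  have hp' : 1 ≤ ENNReal.ofReal p := ENNReal.one_le_ofReal.2 hp
  have hmean : ‖meanVec u - meanVec v‖ ≤ Wp p u v := by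
    rw [meanVec_eq_integral (hu.integrable hp'), meanVec_eq_integral (hv.integrable hp')]
    exact norm_integral_sub_le_Wp hp hu hv
  grw [← hmean]
  exact dissipativity_ex2_meanVec x y u v

/-- dissipativity condition (A2) of Example 6.2:
`2⟨x−y, f(x,u)−f(y,v)⟩ + 3(|g(x,u)−g(y,v)|² + |g⁰(x,u)−g⁰(y,v)|²)
  ≤ −(11/8)|x−y|² + (5/8) W₂²(u,v)`. -/
theorem dissipativity_ex2 :
    ∀ (x y : R2) (u v : Measure R2), MemP2 u → MemP2 v →
      2 * (inner ℝ (x - y) (driftEx2 x u - driftEx2 y v) : ℝ) +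
          3 * (hsNorm (diffEx2 x u - diffEx2 y v) ^ 2 +
            hsNorm (diff0Ex2 x u - diff0Ex2 y v) ^ 2) ≤
        -(11 / 8) * ‖x - y‖ ^ 2 + (5 / 8) * Wp 2 u v ^ 2 := by
  intro x y u v hu hv
  have := hu.1
  have := hv.1
  have h := dissipativity_ex2_general one_le_two x y (by simpa using hu.memLp_id)
    (by simpa using hv.memLp_id)
  linarith [sq_nonneg ‖x - y‖, sq_nonneg (Wp 2 u v)]
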